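/- Let p and q be distinct primes, H a finite abelian p-group, and m a positive integer. Then k(H ⊕ C_{q^m}) = k(H) + 1 − 1/q^m. -/

import Mathlib

/-- The cross number `k(S)` of a sequence (finite multiset) `S` over an additive group:
the sum, with multiplicity, of the reciprocals of the orders of its elements. -/
noncomputable def crossNum {G : Type*} [AddCommGroup G] (S : Multiset G) : ℝ :=
  (S.map fun g => ((addOrderOf g : ℝ))⁻¹).sum

/-- `S` is zero-sum free: no nonempty sub-multiset of `S` has sum `0`. -/
def IsZeroSumFree {G : Type*} [AddCommGroup G] (S : Multiset G) : Prop :=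
  ∀ T : Multiset G, T ≤ S → T ≠ 0 → T.sum ≠ 0

/-- The little cross number `k(G)`: the maximal cross number of a zero-sum free
sequence over `G`. -/
noncomputable def littleK (G : Type*) [AddCommGroup G] : ℝ :=
  sSup {x : ℝ | ∃ S : Multiset G, IsZeroSumFree S ∧ crossNum S = x}

/-!
Write `H = ⨁ i, C_{p ^ n i}`, `k* = ∑ i, (1 - 1 / p ^ n i)` and `N = q ^ m`. The lower bounds
`k(H) ≥ k*` and `k(H ⊕ C_N) ≥ k* + 1 - 1 / N` come from repeating each canonical generator `e` of
order `d` exactly `d - 1` times.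

For the upper bounds, let `R` be a field of characteristic `p`. Since
`(1 - X ^ h) ^ p = 1 - X ^ (p h)` in `R[H]`, giving `1 - X ^ e` the weight `1 / ord e` for each
canonical generator `e` defines a filtration in which `1 - X ^ h` has weight at least `1 / ord h`
for every `h`, and which is zero above `k*`. So `∏ (1 - X ^ h)` vanishes on sequences of cross
number greater than `k*`, while on a zero-sum free sequence its constant coefficient is `1`.

Now let `(h_i, c_i)` be zero-sum free over `H ⊕ C_N`, let `R` contain the `N`-th roots of unity,
and let `ψ` be a primitive character of `C_N`. The constant coefficient of
`∏ (1 - ψ(-σ_i c_i) X ^ (h_i, c_i))` is `1` for every choice of `σ_i ∈ C_N`, so the product is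
nonzero at some character `x ↦ ψ(j x)`. There, the indices with `(j - σ_i) c_i = 0` contribute
untwisted factors `1 - X ^ h_i`, so the load of `j`, the sum of their `1 / ord h_i`, is at most
`k*`. The sets `{j | (j - σ_i) c_i = 0}` are cosets of subgroups of order `N / ord c_i`, which
form a chain because `N` is a prime power. Choosing the `σ_i` greedily keeps all loads at most
`k* + 1`, and one of them is at most `k*`; since `ord (h_i, c_i) = ord h_i * ord c_i`, summing
over `j` shows that `N` times the cross number is at most `N (k* + 1) - 1`.
-/

open Finset
open scoped AddMonoidAlgebra

section ZeroSumFree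

variable {G G' : Type*} [AddCommGroup G] [AddCommGroup G']

lemma crossNum_add (S T : Multiset G) : crossNum (S + T) = crossNum S + crossNum T := by
  simp only [crossNum, Multiset.map_add, Multiset.sum_add]

lemma crossNum_sum {ι : Type*} (s : Finset ι) (S : ι → Multiset G) :
    crossNum (∑ i ∈ s, S i) = ∑ i ∈ s, crossNum (S i) := by
  classical
  induction s using Finset.induction_on with
  | empty => simp only [sum_empty, crossNum, Multiset.map_zero, Multiset.sum_zero]
  | insert a s ha ih => rw [sum_insert ha, sum_insert ha, crossNum_add, ih]

lemma crossNum_map_of_injective {f : G →+ G'} (hf : Function.Injective f) (S : Multiset G) :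
    crossNum (S.map f) = crossNum S := by
  simp only [crossNum, Multiset.map_map, Function.comp_def, addOrderOf_injective f hf]

lemma crossNum_map_val {α : Type*} (s : Finset α) (g : α → G) :
    crossNum (s.val.map g) = ∑ i ∈ s, (addOrderOf (g i) : ℝ)⁻¹ := by
  rw [crossNum, Multiset.map_map]
  rfl

lemma IsZeroSumFree.map_of_injective {f : G →+ G'} (hf : Function.Injective f) {S : Multiset G}
    (hS : IsZeroSumFree S) : IsZeroSumFree (S.map f) := by
  intro T hTS hT hsum
  obtain ⟨U, rfl⟩ : ∃ U : Multiset G, U.map f = T := by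
    refine ⟨T.map (Function.invFun f), ?_⟩
    rw [Multiset.map_map, Multiset.map_congr rfl, Multiset.map_id']
    intro x hx
    obtain ⟨g, -, hg⟩ := Multiset.mem_map.1 (Multiset.mem_of_le hTS hx)
    exact Function.invFun_eq ⟨g, hg⟩
  refine hS U ((Multiset.map_le_map_iff hf).1 hTS) (by simpa using hT) (hf ?_)
  rw [map_multiset_sum, hsum, map_zero]

lemma IsZeroSumFree.add_of_map (f : G →+ G') {S T : Multiset G} (hS : IsZeroSumFree S)
    (hSf : ∀ g ∈ S, f g = 0) (hT : IsZeroSumFree (T.map f)) : IsZeroSumFree (S + T) := by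
  classical
  intro U hU hU0 hsum
  have hle : U - T ≤ S := Multiset.sub_le_iff_le_add.2 hU
  have hf : f (U - T).sum = 0 := by
    rw [map_multiset_sum]
    refine Multiset.sum_eq_zero fun x hx => ?_
    obtain ⟨g, hg, rfl⟩ := Multiset.mem_map.1 hx
    exact hSf g (Multiset.mem_of_le hle hg)
  have hinter : U ∩ T = 0 := by
    by_contra hne
    refine hT ((U ∩ T).map f) (Multiset.map_le_map Multiset.inter_le_right) (by simpa using hne) ?_
    calc ((U ∩ T).map f).sum = f (U - T).sum + f (U ∩ T).sum := by
          rw [hf, zero_add, map_multiset_sum]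
      _ = f U.sum := by rw [← map_add, ← Multiset.sum_add, Multiset.sub_add_inter]
      _ = 0 := by rw [hsum, map_zero]
  have hUS : U ≤ S := by rwa [← Multiset.sub_add_inter U T, hinter, add_zero]
  exact hS U hUS hU0 hsum

lemma isZeroSumFree_zero : IsZeroSumFree (0 : Multiset G) :=
  fun _ hT hT0 => absurd (Multiset.le_zero.1 hT) hT0

lemma IsZeroSumFree.map_inl_add_map_inr {S : Multiset G} {T : Multiset G'} (hS : IsZeroSumFree S)
    (hT : IsZeroSumFree T) :
    IsZeroSumFree (S.map (AddMonoidHom.inl G G') + T.map (AddMonoidHom.inr G G')) := by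
  have hinl : Function.Injective (AddMonoidHom.inl G G') := Prod.mk_left_injective 0
  refine (hS.map_of_injective hinl).add_of_map (AddMonoidHom.snd G G') ?_ ?_
  · intro g hg
    obtain ⟨h, -, rfl⟩ := Multiset.mem_map.1 hg
    rfl
  · simpa [Multiset.map_map, Function.comp_def] using hT

lemma IsZeroSumFree.sum_map_single {ι : Type*} [DecidableEq ι] {A : ι → Type*}
    [∀ i, AddCommGroup (A i)] {S : ∀ i, Multiset (A i)} (hS : ∀ i, IsZeroSumFree (S i))
    (s : Finset ι) : IsZeroSumFree (∑ i ∈ s, (S i).map (AddMonoidHom.single A i)) := by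
  induction s using Finset.induction_on with
  | empty => exact isZeroSumFree_zero
  | insert a s ha ih =>
    rw [sum_insert ha, add_comm]
    refine ih.add_of_map (Pi.evalAddMonoidHom A a) ?_ ?_
    · intro g hg
      obtain ⟨i, hi, hgi⟩ := Multiset.mem_sum.1 hg
      obtain ⟨h, -, rfl⟩ := Multiset.mem_map.1 hgi
      exact Pi.single_eq_of_ne (ne_of_mem_of_not_mem hi ha).symm h
    · simpa [Multiset.map_map, Function.comp_def] using hS a

lemma isZeroSumFree_replicate {n : ℕ} {g : G} (hn : n < addOrderOf g) :
    IsZeroSumFree (Multiset.replicate n g) := by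
  intro T hT hT0 hsum
  obtain ⟨k, hk, rfl⟩ := Multiset.le_replicate_iff.1 hT
  have hdvd : addOrderOf g ∣ k := by
    rwa [addOrderOf_dvd_iff_nsmul_eq_zero, ← Multiset.sum_replicate]
  exact hT0 (by rw [Nat.eq_zero_of_dvd_of_lt hdvd (hk.trans_lt hn), Multiset.replicate_zero])

lemma exists_isZeroSumFree_zmod_crossNum_eq {N : ℕ} (hN : N ≠ 0) :
    ∃ S : Multiset (ZMod N), IsZeroSumFree S ∧ crossNum S = 1 - (N : ℝ)⁻¹ := by
  refine ⟨Multiset.replicate (N - 1) 1, isZeroSumFree_replicate ?_, ?_⟩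
  · rw [ZMod.addOrderOf_one]
    exact Nat.sub_one_lt hN
  · rw [crossNum, Multiset.map_replicate, Multiset.sum_replicate, ZMod.addOrderOf_one,
      nsmul_eq_mul, Nat.cast_pred (Nat.pos_of_ne_zero hN), sub_mul, one_mul,
      mul_inv_cancel₀ (Nat.cast_ne_zero.2 hN)]

lemma IsZeroSumFree.exists_prod_zmod {N : ℕ} (hN : N ≠ 0) {S : Multiset G}
    (hS : IsZeroSumFree S) : ∃ T : Multiset (G × ZMod N),
      IsZeroSumFree T ∧ crossNum T = crossNum S + 1 - (N : ℝ)⁻¹ := by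
  obtain ⟨T, hT, hTk⟩ := exists_isZeroSumFree_zmod_crossNum_eq hN
  refine ⟨_, hS.map_inl_add_map_inr hT, ?_⟩
  have hinl : Function.Injective (AddMonoidHom.inl G (ZMod N)) := Prod.mk_left_injective 0
  have hinr : Function.Injective (AddMonoidHom.inr G (ZMod N)) := Prod.mk_right_injective 0
  rw [crossNum_add, crossNum_map_of_injective hinl, crossNum_map_of_injective hinr, hTk,
    add_sub_assoc]

lemma littleK_congr (e : G ≃+ G') : littleK G = littleK G' := by
  rw [littleK, littleK]
  congr 1
  ext x
  constructor
  · rintro ⟨S, hS, rfl⟩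
    exact ⟨S.map e.toAddMonoidHom, hS.map_of_injective e.injective,
      crossNum_map_of_injective e.injective S⟩
  · rintro ⟨S, hS, rfl⟩
    exact ⟨S.map e.symm.toAddMonoidHom, hS.map_of_injective e.symm.injective,
      crossNum_map_of_injective e.symm.injective S⟩

end ZeroSumFree

section PowerFiltration

variable {R ι : Type*} [CommSemiring R] [Fintype ι]

/-- The weight filtration of a commutative ring attached to elements `x i` of weights `w i`: the
ideal generated by the monomials in the `x i` of weight at least `r`. Weights and thresholds are
real, since they will be compared with cross numbers. -/
def weightIdeal (x : ι → R) (w : ι → ℝ) (r : ℝ) : Ideal R :=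
  Ideal.span {y | ∃ k : ι → ℕ, r ≤ ∑ i, k i * w i ∧ ∏ i, x i ^ k i = y}

variable {x : ι → R} {w : ι → ℝ}

lemma weightIdeal_antitone : Antitone (weightIdeal x w) := by
  intro r r' hr
  refine Ideal.span_mono ?_
  rintro y ⟨k, hk, hy⟩
  exact ⟨k, hr.trans hk, hy⟩

lemma pow_mem_weightIdeal (i : ι) (k : ℕ) : x i ^ k ∈ weightIdeal x w (k * w i) := by
  classical
  refine Ideal.subset_span ⟨Pi.single i k, ?_, ?_⟩
  · rw [Finset.sum_eq_single i (fun j _ hj => by simp [hj]) (by simp), Pi.single_eq_same]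
  · rw [Finset.prod_eq_single i (fun j _ hj => by simp [hj]) (by simp), Pi.single_eq_same]

lemma mul_mem_weightIdeal {r r' : ℝ} {y z : R} (hy : y ∈ weightIdeal x w r)
    (hz : z ∈ weightIdeal x w r') : y * z ∈ weightIdeal x w (r + r') := by
  have hyz := Ideal.mul_mem_mul hy hz
  rw [weightIdeal, weightIdeal, Ideal.span_mul_span'] at hyz
  refine Ideal.span_mono ?_ hyz
  rintro _ ⟨_, ⟨k, hk, rfl⟩, _, ⟨l, hl, rfl⟩, rfl⟩
  refine ⟨k + l, ?_, ?_⟩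
  · simpa only [Pi.add_apply, Nat.cast_add, add_mul, sum_add_distrib] using add_le_add hk hl
  · simp only [Pi.add_apply, pow_add, prod_mul_distrib]

lemma weightIdeal_zero : weightIdeal x w 0 = ⊤ :=
  (Ideal.eq_top_iff_one _).2 (Ideal.subset_span ⟨0, by simp, by simp⟩)

lemma multiset_prod_mem_weightIdeal {α : Type*} {f : α → R} {r : α → ℝ} {S : Multiset α}
    (h : ∀ a ∈ S, f a ∈ weightIdeal x w (r a)) :
    (S.map f).prod ∈ weightIdeal x w (S.map r).sum := by
  induction S using Multiset.induction_on with
  | empty =>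
    rw [Multiset.map_zero, Multiset.map_zero, Multiset.sum_zero, weightIdeal_zero]
    exact Submodule.mem_top
  | cons a S ih =>
    simp only [Multiset.map_cons, Multiset.prod_cons, Multiset.sum_cons]
    rw [Multiset.forall_mem_cons] at h
    exact mul_mem_weightIdeal h.1 (ih h.2)

lemma weightIdeal_eq_bot {N : ι → ℕ} (hx : ∀ i, x i ^ N i = 0) (hw : ∀ i, 0 ≤ w i) {r : ℝ}
    (hr : ∑ i, (N i - 1) * w i < r) : weightIdeal x w r = ⊥ := by
  rw [weightIdeal, Ideal.span_eq_bot]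
  rintro _ ⟨k, hk, rfl⟩
  obtain ⟨i, hi⟩ : ∃ i, N i ≤ k i := by
    by_contra! hlt
    refine absurd (hr.trans_le hk) (sum_le_sum fun i _ => ?_).not_gt
    have hki : (k i : ℝ) + 1 ≤ N i := by exact_mod_cast hlt i
    exact mul_le_mul_of_nonneg_right (by linarith) (hw i)
  exact prod_eq_zero (mem_univ i) (pow_eq_zero_of_le hi (hx i))

end PowerFiltration

section GroupAlgebra

variable {R H : Type*} [CommRing R] [AddCommGroup H]

/-- The subgroup of those `h` for which the group algebra element `1 - X ^ h` lies in a given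
ideal (a dimension subgroup when the ideal is a power of the augmentation ideal). -/
def dimensionSubgroup (I : Ideal R[H]) : AddSubgroup H where
  carrier := {h | 1 - .single h 1 ∈ I}
  zero_mem' := by
    change 1 - 1 ∈ I
    rw [sub_self]
    exact I.zero_mem
  add_mem' {g h} hg hh := by
    have heq : (1 - .single (g + h) 1 : R[H]) =
        1 - .single g 1 + .single g 1 * (1 - .single h 1) := by
      rw [mul_sub, AddMonoidAlgebra.single_mul_single]
      simp
    change 1 - .single (g + h) 1 ∈ I
    rw [heq]
    exact I.add_mem hg (I.mul_mem_left _ hh)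
  neg_mem' {h} hh := by
    have heq : (1 - .single (-h) 1 : R[H]) = .single (-h) (-1) * (1 - .single h 1) := by
      rw [mul_sub, mul_one, AddMonoidAlgebra.single_mul_single, neg_add_cancel, mul_one,
        AddMonoidAlgebra.single_neg, AddMonoidAlgebra.single_neg, ← AddMonoidAlgebra.one_def,
        neg_sub_neg]
    change 1 - .single (-h) 1 ∈ I
    rw [heq]
    exact I.mul_mem_left _ hh

lemma mem_dimensionSubgroup {I : Ideal R[H]} {h : H} :
    h ∈ dimensionSubgroup I ↔ 1 - .single h 1 ∈ I :=
  Iff.rfl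

lemma one_sub_single_pow_char_pow (p : ℕ) [Fact p.Prime] [CharP R p] (h : H) (n : ℕ) :
    (1 - .single h 1 : R[H]) ^ p ^ n = 1 - .single (p ^ n • h) 1 := by
  have : Nontrivial R := CharP.nontrivial_of_char_ne_one (Fact.out : p.Prime).ne_one
  have : CharP R[H] p :=
    charP_of_injective_algebraMap (FaithfulSMul.algebraMap_injective R R[H]) p
  rw [sub_pow_char_pow, one_pow, AddMonoidAlgebra.single_pow, one_pow]

/-- In `R[H]`, every product of elements `1 - X ^ h` vanishes as soon as the cross number of the
sequence of the exponents `h` exceeds `κ`. This is the ring-theoretic form in which the bound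
`crossNum S ≤ κ` for zero-sum free `S` over `H` carries over to products `H × C_N`. -/
def HasVanishingBound (R H : Type*) [CommRing R] [AddCommGroup H] (κ : ℝ) : Prop :=
  ∀ S : Multiset H, κ < crossNum S → (S.map fun h => (1 - .single h 1 : R[H])).prod = 0

lemma coeff_zero_prod_one_sub_single {α : Type*} {s : Finset α} {g : α → H}
    (hs : IsZeroSumFree (s.val.map g)) (a : α → R) :
    (∏ i ∈ s, (1 - .single (g i) (a i) : R[H])).coeff 0 = 1 := by
  classical
  simp only [sub_eq_add_neg, ← AddMonoidAlgebra.single_neg, prod_one_add,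
    AddMonoidAlgebra.prod_single, AddMonoidAlgebra.coeff_sum, Finsupp.finsetSum_apply,
    AddMonoidAlgebra.coeff_single]
  rw [Finset.sum_eq_single ∅]
  · simp
  · intro t ht hne
    have hsum : ∑ i ∈ t, g i ≠ 0 :=
      hs (t.val.map g) (Multiset.map_le_map (Finset.val_le_iff.2 (mem_powerset.1 ht)))
        (by simpa using hne)
    exact Finsupp.single_eq_of_ne hsum.symm
  · exact fun h => absurd (empty_mem_powerset s) h

lemma HasVanishingBound.crossNum_le [Nontrivial R] {κ : ℝ} (hκ : HasVanishingBound R H κ)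
    {S : Multiset H} (hS : IsZeroSumFree S) : crossNum S ≤ κ := by
  classical
  by_contra! hlt
  obtain ⟨s, rfl⟩ : ∃ s : Finset (H × ℕ), s.val.map Prod.fst = S := ⟨_, S.map_toEnumFinset_fst⟩
  have hprod : ∏ i ∈ s, (1 - .single i.1 1 : R[H]) = 0 := by
    have hzero := hκ _ hlt
    rwa [Multiset.map_map] at hzero
  have hcoeff := coeff_zero_prod_one_sub_single hS (fun _ => (1 : R))
  rw [hprod] at hcoeff
  exact zero_ne_one hcoeff

end GroupAlgebra

section PrimePowerGroup

variable {ι : Type*} [Fintype ι]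

/-- The number `k*(G) = ∑ i, (1 - 1 / N i)` for `G = ⨁ i, C_{N i}`: the cross number of the sequence
that repeats the `i`-th canonical generator `N i - 1` times. In the literature the `N i` are prime
powers, which makes it an invariant of `G`. -/
noncomputable def kStar (N : ι → ℕ) : ℝ :=
  ∑ i, (1 - (N i : ℝ)⁻¹)

lemma exists_isZeroSumFree_pi_crossNum_eq_kStar {N : ι → ℕ} (hN : ∀ i, N i ≠ 0) :
    ∃ S : Multiset (∀ i, ZMod (N i)), IsZeroSumFree S ∧ crossNum S = kStar N := by
  classical
  choose S hS hSk using fun i => exists_isZeroSumFree_zmod_crossNum_eq (hN i)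
  refine ⟨_, IsZeroSumFree.sum_map_single hS univ, ?_⟩
  rw [crossNum_sum, kStar]
  refine sum_congr rfl fun i _ => ?_
  have hsingle : Function.Injective (AddMonoidHom.single (fun i => ZMod (N i)) i) :=
    fun _ _ h => Pi.single_injective i h
  rw [crossNum_map_of_injective hsingle, hSk]

/-- The filtration of the group algebra of `⨁ i, C_{N i}` in which the factor `1 - X ^ e i`
attached to the `i`-th canonical generator has weight `1 / N i`, the reciprocal of the order of
`e i`. Products of factors `1 - X ^ h` are located in it by their cross number. -/
noncomputable def augmentationFiltration [DecidableEq ι] (R : Type*) [CommRing R] (N : ι → ℕ) :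
    ℝ → Ideal R[∀ i, ZMod (N i)] :=
  weightIdeal (fun i => 1 - .single (Pi.single i 1) 1) (fun i => (N i : ℝ)⁻¹)

lemma exists_eq_nsmul_one {N : ℕ} [NeZero N] (c : ZMod N) :
    ∃ t : ℕ, c = t • (N / addOrderOf c) • 1 := by
  have hdvd : addOrderOf c ∣ N := by
    simpa using addOrderOf_dvd_natCard c
  have hval : N / addOrderOf c ∣ c.val := by
    rw [Nat.div_dvd_iff_dvd_mul hdvd (addOrderOf_pos c), ← ZMod.natCast_eq_zero_iff,
      Nat.cast_mul, ZMod.natCast_zmod_val, ← nsmul_eq_mul, addOrderOf_nsmul_eq_zero]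
  obtain ⟨t, ht⟩ := hval
  refine ⟨t, ?_⟩
  rw [smul_smul, mul_comm, ← ht, nsmul_one, ZMod.natCast_zmod_val]

variable {R : Type*} [CommRing R] {p : ℕ} [Fact p.Prime] [CharP R p] {n : ι → ℕ}

lemma single_mem_dimensionSubgroup [DecidableEq ι] (i : ι) (c : ZMod (p ^ n i)) :
    Pi.single i c ∈
      dimensionSubgroup (augmentationFiltration R (fun i => p ^ n i) (addOrderOf c : ℝ)⁻¹) := by
  have hdvd : addOrderOf c ∣ p ^ n i := by
    simpa using addOrderOf_dvd_natCard c
  obtain ⟨b, -, hb⟩ := (Nat.dvd_prime_pow Fact.out).1 (Nat.div_dvd_of_dvd hdvd)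
  have hweight : ((p ^ b : ℕ) : ℝ) * ((p ^ n i : ℕ) : ℝ)⁻¹ = (addOrderOf c : ℝ)⁻¹ := by
    have hc : (addOrderOf c : ℝ) ≠ 0 := Nat.cast_ne_zero.2 (addOrderOf_pos c).ne'
    have hp : ((p ^ n i : ℕ) : ℝ) ≠ 0 := Nat.cast_ne_zero.2 (NeZero.ne _)
    rw [← hb, Nat.cast_div hdvd hc, div_mul_eq_mul_div, mul_inv_cancel₀ hp, one_div]
  obtain ⟨t, ht⟩ := exists_eq_nsmul_one c
  rw [hb] at ht
  rw [← hweight, ht, Pi.single_smul, Pi.single_smul]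
  refine AddSubgroup.nsmul_mem _ ?_ t
  rw [mem_dimensionSubgroup, ← one_sub_single_pow_char_pow]
  exact pow_mem_weightIdeal i (p ^ b)

lemma mem_dimensionSubgroup_augmentationFiltration [DecidableEq ι] (h : ∀ i, ZMod (p ^ n i)) :
    h ∈ dimensionSubgroup (augmentationFiltration R (fun i => p ^ n i) (addOrderOf h : ℝ)⁻¹) := by
  nth_rw 2 [← Finset.univ_sum_single h]
  refine sum_mem fun i _ => ?_
  have hle : (addOrderOf (h i) : ℝ) ≤ addOrderOf h := by
    exact_mod_cast Nat.le_of_dvd (addOrderOf_pos h)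
      (addOrderOf_map_dvd (Pi.evalAddMonoidHom (fun i => ZMod (p ^ n i)) i) h)
  have hpos : (0 : ℝ) < addOrderOf (h i) := by exact_mod_cast addOrderOf_pos (h i)
  exact weightIdeal_antitone (inv_anti₀ hpos hle) (single_mem_dimensionSubgroup i (h i))

lemma hasVanishingBound_pi_zmod :
    HasVanishingBound R (∀ i, ZMod (p ^ n i)) (kStar fun i => p ^ n i) := by
  classical
  intro S hS
  have hmem : (S.map fun h => (1 - .single h 1 : R[∀ i, ZMod (p ^ n i)])).prod ∈
      augmentationFiltration R (fun i => p ^ n i) (crossNum S) :=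
    multiset_prod_mem_weightIdeal fun h _ => mem_dimensionSubgroup_augmentationFiltration h
  have hbot : augmentationFiltration R (fun i => p ^ n i) (crossNum S) = ⊥ := by
    refine weightIdeal_eq_bot (N := fun i => p ^ n i) (fun i => ?_) (fun i => by positivity) ?_
    · have hzero : p ^ n i • (Pi.single i 1 : ∀ i, ZMod (p ^ n i)) = 0 := by
        rw [← Pi.single_smul, nsmul_one, ZMod.natCast_self, Pi.single_zero]
      rw [one_sub_single_pow_char_pow, hzero, ← AddMonoidAlgebra.one_def, sub_self]
    · refine hS.trans_eq' (sum_congr rfl fun i _ => ?_)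
      rw [sub_mul, one_mul, mul_inv_cancel₀ (Nat.cast_ne_zero.2 (NeZero.ne _))]
  rwa [hbot, Ideal.mem_bot] at hmem

end PrimePowerGroup

section CosetLoad

variable {α A : Type*} [AddCommGroup A] {K : α → AddSubgroup A} {σ : α → A} {w : α → ℝ}
  {s : Finset α}

open Classical in
/-- The total weight at `j` of the cosets `σ i + K i` with `i ∈ s` that contain `j`. Below, `j`
runs over the characters of a cyclic group, and the coset of `i` over those for which the `i`-th
factor of a product in a group algebra is untwisted. -/
noncomputable def cosetLoad (K : α → AddSubgroup A) (σ : α → A) (w : α → ℝ) (s : Finset α)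
    (j : A) : ℝ :=
  ∑ i ∈ s with j - σ i ∈ K i, w i

lemma cosetLoad_insert [DecidableEq α] {a : α} (ha : a ∉ s) (j : A) [Decidable (j - σ a ∈ K a)] :
    cosetLoad K σ w (insert a s) j =
      (if j - σ a ∈ K a then w a else 0) + cosetLoad K σ w s j := by
  classical
  rw [cosetLoad, sum_filter, sum_insert ha, ← sum_filter, cosetLoad]
  congr!

lemma cosetLoad_update [DecidableEq α] {a : α} (ha : a ∉ s) (x j : A) :
    cosetLoad K (Function.update σ a x) w s j = cosetLoad K σ w s j := by
  classical
  rw [cosetLoad, cosetLoad]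
  congr 1
  exact filter_congr fun i hi => by rw [Function.update_of_ne (ne_of_mem_of_not_mem hi ha)]

lemma cosetLoad_eq_of_sub_mem {j j' : A} (h : ∀ i ∈ s, j - j' ∈ K i) :
    cosetLoad K σ w s j = cosetLoad K σ w s j' := by
  classical
  rw [cosetLoad, cosetLoad]
  congr 1
  refine filter_congr fun i hi => ?_
  rw [← sub_add_sub_cancel j j' (σ i), (K i).add_mem_cancel_left (h i hi)]

/-- The cosets are placed greedily, the largest subgroups first: the new coset goes where the load
is at most `κ`, and the loads are constant along it since all earlier subgroups are larger. -/
lemma exists_cosetLoad_le_add_one (hK : ∀ i j, K i ≤ K j ∨ K j ≤ K i) (hw0 : ∀ i, 0 ≤ w i)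
    (hw1 : ∀ i, w i ≤ 1) [Finite A] {κ : ℝ} (hκ : ∀ σ, ∃ j, cosetLoad K σ w s j ≤ κ) :
    ∃ σ, ∀ j, cosetLoad K σ w s j ≤ κ + 1 := by
  classical
  induction s using Finset.induction_on_min_value (fun i => Nat.card (K i)) with
  | empty =>
    obtain ⟨j, hj⟩ := hκ 0
    exact ⟨0, fun j' => by simpa [cosetLoad] using hj.trans (lt_add_one κ).le⟩
  | insert a s ha hmin ih =>
    have hle (i) (hi : i ∈ s) : K a ≤ K i := by
      rcases hK a i with h | h
      · exact h
      · exact (AddSubgroup.eq_of_le_of_card_ge h (hmin i hi)).ge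
    have hs (σ : α → A) : ∃ j, cosetLoad K σ w s j ≤ κ := by
      obtain ⟨j, hj⟩ := hκ σ
      rw [cosetLoad_insert ha] at hj
      refine ⟨j, hj.trans' (le_add_of_nonneg_left ?_)⟩
      split_ifs
      exacts [hw0 a, le_rfl]
    obtain ⟨σ, hσ⟩ := ih hs
    obtain ⟨j₀, hj₀⟩ := hs σ
    refine ⟨Function.update σ a j₀, fun j => ?_⟩
    rw [cosetLoad_insert ha, cosetLoad_update ha, Function.update_self]
    split_ifs with hj
    · rw [cosetLoad_eq_of_sub_mem fun i hi => hle i hi hj]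
      linarith [hw1 a]
    · rw [zero_add]
      exact hσ j

lemma sum_cosetLoad [Fintype A] : ∑ j, cosetLoad K σ w s j = ∑ i ∈ s, w i * Nat.card (K i) := by
  classical
  simp only [cosetLoad, sum_filter]
  rw [sum_comm]
  refine sum_congr rfl fun i _ => ?_
  have hcard : #{j | j - σ i ∈ K i} = Nat.card (K i) := by
    rw [← Fintype.card_subtype, ← Nat.card_eq_fintype_card]
    exact Nat.card_congr ((Equiv.subRight (σ i)).subtypeEquiv fun _ => Iff.rfl)
  rw [← sum_filter, sum_const, hcard, nsmul_eq_mul, mul_comm]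

/-- The gain of `1` over the trivial averaging bound comes from the point where the load is at
most `κ`. -/
lemma sum_mul_card_le [Finite A] (hK : ∀ i j, K i ≤ K j ∨ K j ≤ K i) (hw0 : ∀ i, 0 ≤ w i)
    (hw1 : ∀ i, w i ≤ 1) {κ : ℝ} (hκ : ∀ σ, ∃ j, cosetLoad K σ w s j ≤ κ) :
    ∑ i ∈ s, w i * Nat.card (K i) ≤ Nat.card A * (κ + 1) - 1 := by
  classical
  have := Fintype.ofFinite A
  obtain ⟨σ, hσ⟩ := exists_cosetLoad_le_add_one hK hw0 hw1 hκ
  obtain ⟨j₀, hj₀⟩ := hκ σ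
  calc ∑ i ∈ s, w i * Nat.card (K i) = ∑ j, cosetLoad K σ w s j := sum_cosetLoad.symm
    _ ≤ ∑ j, (κ + 1 - if j = j₀ then 1 else 0) := by
      refine sum_le_sum fun j _ => ?_
      split_ifs with hj
      · rwa [hj, add_sub_cancel_right]
      · rw [sub_zero]
        exact hσ j
    _ = Nat.card A * (κ + 1) - 1 := by
      rw [sum_sub_distrib, sum_const, nsmul_eq_mul, sum_ite_eq' univ j₀, if_pos (mem_univ j₀),
        card_univ, Nat.card_eq_fintype_card]

end CosetLoad

section CharacterEvaluation

variable {R H : Type*} [CommRing R] [AddCommGroup H]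

/-- Evaluation of the second group variable at a character `χ`: the algebra homomorphism
`R[H × A] → R[H]` sending `X ^ (h, c)` to `χ c • X ^ h`. -/
noncomputable def evalSnd {A : Type*} [AddCommGroup A] (H : Type*) [AddCommGroup H]
    (χ : AddChar A R) : R[H × A] →ₐ[R] R[H] :=
  AddMonoidAlgebra.lift R R[H] (H × A)
    { toFun := fun g => .single g.toAdd.1 (χ g.toAdd.2)
      map_one' := by simp [AddMonoidAlgebra.one_def]
      map_mul' := fun g g' => by
        rw [AddMonoidAlgebra.single_mul_single, ← AddChar.map_add_eq_mul]
        rfl }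

lemma evalSnd_single {A : Type*} [AddCommGroup A] (χ : AddChar A R) (g : H × A) (b : R) :
    evalSnd H χ (.single g b) = .single g.1 (b * χ g.2) := by
  rw [evalSnd, AddMonoidAlgebra.lift_single]
  simp

lemma sum_coeff_zero_evalSnd_mulShift [IsDomain R] {A : Type*} [CommRing A] [Fintype A]
    {ψ : AddChar A R} (hψ : ψ.IsPrimitive) (F : R[H × A]) :
    ∑ j, (evalSnd H (ψ.mulShift j) F).coeff 0 = Fintype.card A * F.coeff 0 := by
  classical
  induction F using AddMonoidAlgebra.induction_linear with
  | zero => simp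
  | add F F' hF hF' =>
    simp only [map_add, AddMonoidAlgebra.coeff_add, Finsupp.add_apply, sum_add_distrib, hF, hF',
      mul_add]
  | single g b =>
    obtain ⟨h, c⟩ := g
    simp only [evalSnd_single, AddMonoidAlgebra.coeff_single, Finsupp.single_apply,
      AddChar.mulShift_apply, Prod.mk_eq_zero]
    by_cases hh : h = 0
    · simp only [hh, if_true, true_and]
      rw [← mul_sum, AddChar.sum_mulShift c hψ]
      split_ifs
      · exact mul_comm _ _
      · simp
    · simp only [hh, if_false, sum_const_zero, false_and, mul_zero]

end CharacterEvaluation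

section Annihilator

variable {N : ℕ}

/-- The annihilator of `c`, that is, the group of those `j` for which the character
`x ↦ ψ (j * x)` attached to a primitive character `ψ` is trivial at `c`. -/
def annihilator (c : ZMod N) : AddSubgroup (ZMod N) :=
  (AddMonoidHom.mulRight c).ker

lemma mem_annihilator {c j : ZMod N} : j ∈ annihilator c ↔ j * c = 0 :=
  Iff.rfl

lemma card_annihilator_mul_addOrderOf (c : ZMod N) :
    Nat.card (annihilator c) * addOrderOf c = N := by
  have hrange : (AddMonoidHom.mulRight c).range = AddSubgroup.zmultiples c := by
    ext y
    rw [AddMonoidHom.mem_range, AddSubgroup.mem_zmultiples_iff]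
    refine ((ZMod.intCast_surjective (n := N)).exists).trans (exists_congr fun k => ?_)
    rw [AddMonoidHom.coe_mulRight, zsmul_eq_mul]
  rw [← Nat.card_zmultiples, ← hrange, ← AddSubgroup.index_ker, annihilator,
    AddSubgroup.card_mul_index, Nat.card_zmod]

lemma annihilator_le_of_addOrderOf_dvd [NeZero N] {c d : ZMod N}
    (h : addOrderOf c ∣ addOrderOf d) : annihilator d ≤ annihilator c := by
  intro j hj
  rw [mem_annihilator] at hj ⊢
  rw [← ZMod.natCast_zmod_val j, ← nsmul_eq_mul, ← addOrderOf_dvd_iff_nsmul_eq_zero] at hj ⊢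
  exact h.trans hj

lemma annihilator_le_total {q m : ℕ} (hq : q.Prime) (c d : ZMod (q ^ m)) :
    annihilator c ≤ annihilator d ∨ annihilator d ≤ annihilator c := by
  have : NeZero (q ^ m) := ⟨pow_ne_zero m hq.ne_zero⟩
  have horder (x : ZMod (q ^ m)) : ∃ k ≤ m, addOrderOf x = q ^ k := by
    rw [← Nat.dvd_prime_pow hq]
    simpa using addOrderOf_dvd_natCard x
  obtain ⟨k, -, hk⟩ := horder c
  obtain ⟨l, -, hl⟩ := horder d
  refine (le_total l k).imp (fun h => ?_) fun h => ?_ <;>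
    exact annihilator_le_of_addOrderOf_dvd (by rw [hk, hl]; exact pow_dvd_pow q h)

end Annihilator

section UpperBound

variable {R H α : Type*} [CommRing R] [IsDomain R] [AddCommGroup H] {κ : ℝ} {s : Finset α}

/-- If all loads exceeded `κ`, then the product of the factors `1 - ψ (-(σ i * c i)) X ^ g i`, where
`g i = (h i, c i)`, would vanish at every character, whereas its constant coefficient is `1`. -/
lemma exists_cosetLoad_annihilator_le {N : ℕ} [NeZero N] {ζ : R} (hζ : IsPrimitiveRoot ζ N)
    (hκ : HasVanishingBound R H κ)
    {g : α → H × ZMod N} (hg : IsZeroSumFree (s.val.map g)) (σ : α → ZMod N) :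
    ∃ j, cosetLoad (fun i => annihilator (g i).2) σ (fun i => (addOrderOf (g i).1 : ℝ)⁻¹) s j
      ≤ κ := by
  classical
  by_contra! hload
  let ψ := AddChar.zmodChar N hζ.pow_eq_one
  have hψ : ψ.IsPrimitive := AddChar.zmodChar_primitive_of_primitive_root N hζ
  let F : R[H × ZMod N] := ∏ i ∈ s, (1 - .single (g i) (ψ (-(σ i * (g i).2))))
  have heval (j : ZMod N) : evalSnd H (ψ.mulShift j) F =
      ∏ i ∈ s, (1 - .single (g i).1 (ψ ((j - σ i) * (g i).2))) := by
    simp only [F, map_prod, map_sub, map_one, evalSnd_single, AddChar.mulShift_apply,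
      ← AddChar.map_add_eq_mul]
    exact prod_congr rfl fun i _ => by rw [sub_mul, neg_add_eq_sub]
  have hzero (j : ZMod N) : evalSnd H (ψ.mulShift j) F = 0 := by
    have hcov := hκ ({i ∈ s | j - σ i ∈ annihilator (g i).2}.val.map fun i => (g i).1)
      (by rw [crossNum_map_val]; exact hload j)
    rw [Multiset.map_map] at hcov
    rw [heval, ← prod_filter_mul_prod_filter_not s (fun i => j - σ i ∈ annihilator (g i).2)]
    refine mul_eq_zero_of_left (Eq.trans (prod_congr rfl fun i hi => ?_) hcov) _
    rw [mem_annihilator.1 (mem_filter.1 hi).2, AddChar.map_zero_eq_one, Function.comp_apply]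
  have hsum := sum_coeff_zero_evalSnd_mulShift hψ F
  rw [coeff_zero_prod_one_sub_single hg, mul_one, ZMod.card] at hsum
  exact hζ.neZero'.out (hsum.symm.trans (sum_eq_zero fun j _ => by rw [hzero]; rfl))

lemma HasVanishingBound.crossNum_prod_zmod_le {q m : ℕ} (hq : q.Prime)
    (hcop : (Nat.card H).Coprime (q ^ m)) (hκ : HasVanishingBound R H κ) {ζ : R}
    (hζ : IsPrimitiveRoot ζ (q ^ m)) {S : Multiset (H × ZMod (q ^ m))} (hS : IsZeroSumFree S) :
    crossNum S ≤ κ + 1 - ((q : ℝ) ^ m)⁻¹ := by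
  classical
  have : NeZero (q ^ m) := ⟨pow_ne_zero m hq.ne_zero⟩
  obtain ⟨s, rfl⟩ : ∃ s : Finset ((H × ZMod (q ^ m)) × ℕ), s.val.map Prod.fst = S :=
    ⟨_, S.map_toEnumFinset_fst⟩
  have hloads := sum_mul_card_le (fun i j => annihilator_le_total hq i.1.2 j.1.2)
    (fun i => inv_nonneg.2 (Nat.cast_nonneg _)) (fun i => Nat.cast_inv_le_one _)
    (exists_cosetLoad_annihilator_le hζ hκ hS)
  have hterm (g : H × ZMod (q ^ m)) : ((q : ℝ) ^ m) * (addOrderOf g : ℝ)⁻¹ =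
      (addOrderOf g.1 : ℝ)⁻¹ * Nat.card (annihilator g.2) := by
    have hord : addOrderOf g = addOrderOf g.1 * addOrderOf g.2 := by
      rw [Prod.addOrderOf]
      refine (hcop.of_dvd (addOrderOf_dvd_natCard g.1) ?_).lcm_eq_mul
      simpa using addOrderOf_dvd_natCard g.2
    have hc : (addOrderOf g.2 : ℝ) ≠ 0 := Nat.cast_ne_zero.2 (addOrderOf_pos g.2).ne'
    have hcard : (q : ℝ) ^ m = Nat.card (annihilator g.2) * addOrderOf g.2 := by
      exact_mod_cast (card_annihilator_mul_addOrderOf g.2).symm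
    rw [hord, hcard, Nat.cast_mul, mul_inv]
    field_simp
  have hpos : (0 : ℝ) < (q : ℝ) ^ m := pow_pos (Nat.cast_pos.2 hq.pos) m
  refine le_of_mul_le_mul_left ?_ hpos
  calc (q : ℝ) ^ m * crossNum (s.val.map Prod.fst)
      = ∑ i ∈ s, (addOrderOf i.1.1 : ℝ)⁻¹ * Nat.card (annihilator i.1.2) := by
        rw [crossNum_map_val, mul_sum]
        exact sum_congr rfl fun i _ => hterm i.1
    _ ≤ (q : ℝ) ^ m * (κ + 1) - 1 := by simpa using hloads
    _ = (q : ℝ) ^ m * (κ + 1 - ((q : ℝ) ^ m)⁻¹) := by rw [mul_sub, mul_inv_cancel₀ hpos.ne']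

end UpperBound

section LittleCrossNumber

variable {ι : Type*} [Fintype ι] {n : ι → ℕ} {p : ℕ} [Fact p.Prime]

lemma littleK_eq {G : Type*} [AddCommGroup G] {κ : ℝ}
    (hle : ∀ S : Multiset G, IsZeroSumFree S → crossNum S ≤ κ)
    (hex : ∃ S : Multiset G, IsZeroSumFree S ∧ crossNum S = κ) : littleK G = κ :=
  IsGreatest.csSup_eq ⟨hex, by rintro _ ⟨S, hS, rfl⟩; exact hle S hS⟩

lemma littleK_pi_zmod : littleK (∀ i, ZMod (p ^ n i)) = kStar fun i => p ^ n i :=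
  littleK_eq (fun _ => (hasVanishingBound_pi_zmod (R := ZMod p)).crossNum_le)
    (exists_isZeroSumFree_pi_crossNum_eq_kStar fun _ => NeZero.ne _)

lemma littleK_pi_zmod_prod_zmod {q : ℕ} (hq : q.Prime) (hpq : p ≠ q) (m : ℕ) :
    littleK ((∀ i, ZMod (p ^ n i)) × ZMod (q ^ m)) =
      (kStar fun i => p ^ n i) + 1 - ((q : ℝ) ^ m)⁻¹ := by
  have hpqm : p.Coprime (q ^ m) := ((Nat.coprime_primes Fact.out hq).2 hpq).pow_right m
  have hcop : (Nat.card (∀ i, ZMod (p ^ n i))).Coprime (q ^ m) := by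
    rw [Nat.card_pi]
    refine Nat.Coprime.prod_left fun i _ => ?_
    rw [Nat.card_zmod]
    exact hpqm.pow_left (n i)
  let K := AlgebraicClosure (ZMod p)
  have : CharP K p := charP_of_injective_algebraMap (algebraMap (ZMod p) K).injective p
  have : NeZero ((q ^ m : ℕ) : K) := ⟨by
    rw [Ne, CharP.cast_eq_zero_iff K p]
    exact fun hdvd => (Fact.out : p.Prime).ne_one (Nat.eq_one_of_dvd_coprimes hpqm dvd_rfl hdvd)⟩
  have := IsSepClosed.hasEnoughRootsOfUnity K (q ^ m)
  obtain ⟨ζ, hζ⟩ := HasEnoughRootsOfUnity.exists_primitiveRoot K (q ^ m)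
  refine littleK_eq
    (fun S hS => hasVanishingBound_pi_zmod.crossNum_prod_zmod_le hq hcop hζ hS) ?_
  obtain ⟨S, hS, hSk⟩ := exists_isZeroSumFree_pi_crossNum_eq_kStar
    (N := fun i => p ^ n i) fun _ => NeZero.ne _
  obtain ⟨T, hT, hTk⟩ := hS.exists_prod_zmod (pow_ne_zero m hq.ne_zero)
  exact ⟨T, hT, by rw [hTk, hSk, Nat.cast_pow]⟩

lemma exists_addEquiv_pi_zmod_prime_pow {p : ℕ} (hp : p.Prime) {H : Type*} [AddCommGroup H]
    [Finite H] {k : ℕ} (hH : Nat.card H = p ^ k) :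
    ∃ (ι : Type) (_ : Fintype ι) (n : ι → ℕ), Nonempty (H ≃+ ∀ i, ZMod (p ^ n i)) := by
  classical
  obtain ⟨ι, _, N, -, ⟨e⟩⟩ := AddCommGroup.equiv_directSum_zmod_of_finite' H
  let e' := e.trans (DirectSum.addEquivProd fun i => ZMod (N i))
  have hpow (i : ι) : ∃ n ≤ k, N i = p ^ n := by
    rw [← Nat.dvd_prime_pow hp, ← hH, Nat.card_congr e'.toEquiv, Nat.card_pi]
    simpa only [Nat.card_zmod] using dvd_prod_of_mem N (mem_univ i)
  choose n _ hn using hpow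
  obtain rfl : N = fun i => p ^ n i := funext hn
  exact ⟨ι, inferInstance, n, ⟨e'⟩⟩

end LittleCrossNumber

/-- For distinct primes `p, q`, a finite abelian `p`-group `H` and `m ≥ 1`:
`k(H ⊕ C_{q^m}) = k(H) + 1 - 1/q^m`. -/
theorem littleK_pGroup_prod_zmod_q_pow
    (p q : ℕ) (hp : p.Prime) (hq : q.Prime) (hpq : p ≠ q)
    (H : Type*) [AddCommGroup H] [Finite H] (hH : ∃ n : ℕ, Nat.card H = p ^ n)
    (m : ℕ) (hm : 0 < m) :
    littleK (H × ZMod (q ^ m)) = littleK H + 1 - ((q : ℝ) ^ m)⁻¹ := by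
  have : Fact p.Prime := ⟨hp⟩
  obtain ⟨k, hk⟩ := hH
  obtain ⟨ι, _, n, ⟨e⟩⟩ := exists_addEquiv_pi_zmod_prime_pow hp hk
  rw [littleK_congr e, littleK_congr (e.prodCongr (AddEquiv.refl _)), littleK_pi_zmod,
    littleK_pi_zmod_prod_zmod hq hpq m]
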